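/- Let Z be a standard Gaussian random variable and let v : ℝ → ℝ be a bounded, non-increasing Borel function which is not almost everywhere constant with respect to the Gaussian law of Z. Then E[e^{v(Z)} Z] < E[e^{v(Z)}]·E[Z] = 0. Consequently, the function ψ(σ) = E[e^{σZ + v(Z)}] satisfies ψ′(0) = E[e^{v(Z)}Z] < 0, and hence there exists σ_0 > 0 such that ψ is strictly decreasing on [0,σ_0]. -/

import Mathlib

open MeasureTheory ProbabilityTheory Real Set

/-!
Write `m = E[Z]`. For antitone `f` the variable `(f m - f (Z)) * (Z - m)` is nonnegative, and its
mean is `E[f (Z)] * m - E[f (Z) * Z]` because `E[Z - m] = 0`. If that mean vanishes, then a.s.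
`f (Z) = f m` or `Z = m`, so `f (Z) = f m` in either case. Strict co-monotony follows, and it is
applied to `f = exp ∘ v`.

Up to the factor `ψ 0`, the function `ψ` is the moment generating function of `Z` under the measure
tilted by `v (Z)`. It is therefore analytic near `0`, and `ψ' 0 < 0` persists on a neighbourhood.
-/

open Filter Topology

theorem exists_strictAntiOn_Icc_of_deriv_neg {f : ℝ → ℝ} {a : ℝ} (hf : ContDiffAt ℝ 1 f a)
    (hfa : deriv f a < 0) : ∃ b > a, StrictAntiOn f (Icc a b) := by
  have hderiv_cont : ContinuousAt (deriv f) a := (hf.derivWithin (m := 0) le_rfl).continuousAt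
  have hneg : ∀ᶠ x in 𝓝 a, deriv f x < 0 := hderiv_cont.eventually_lt_const hfa
  obtain ⟨b, hab, hb⟩ := mem_nhdsGE_iff_exists_Icc_subset.1 (mem_nhdsWithin_of_mem_nhds hneg)
  refine ⟨b, hab, strictAntiOn_of_deriv_neg (convex_Icc a b) (fun x hx ↦ ?_)
    fun x hx ↦ hb (interior_subset hx)⟩
  exact (differentiableAt_of_deriv_ne_zero (hb hx).ne).continuousAt.continuousWithinAt

section

variable {Ω : Type*} {mΩ : MeasurableSpace Ω} {μ : Measure Ω}

theorem integral_antitone_comp_mul_lt [IsProbabilityMeasure μ] {X : Ω → ℝ} {f : ℝ → ℝ}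
    (hf : Antitone f) (hX : Integrable X μ) (hfX : Integrable (fun ω ↦ f (X ω)) μ)
    (hfXX : Integrable (fun ω ↦ f (X ω) * X ω) μ)
    (hconst : ∀ c, ¬ ∀ᵐ ω ∂μ, f (X ω) = c) :
    ∫ ω, f (X ω) * X ω ∂μ < (∫ ω, f (X ω) ∂μ) * ∫ ω, X ω ∂μ := by
  set m := ∫ ω, X ω ∂μ with hm
  let gap : Ω → ℝ := fun ω ↦ (f m - f (X ω)) * (X ω - m)
  have hgap_eq : gap = fun ω ↦ f m * (X ω - m) - (f (X ω) * X ω - f (X ω) * m) := by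
    ext ω; ring
  have hcentered : Integrable (fun ω ↦ f m * (X ω - m)) μ :=
    (hX.sub (integrable_const m)).const_mul (f m)
  have hcross : Integrable (fun ω ↦ f (X ω) * X ω - f (X ω) * m) μ := hfXX.sub (hfX.mul_const m)
  have hgap_int : Integrable gap μ := hgap_eq ▸ hcentered.sub hcross
  have hgap_integral : ∫ ω, gap ω ∂μ = (∫ ω, f (X ω) ∂μ) * m - ∫ ω, f (X ω) * X ω ∂μ := by
    have hcentered_integral : ∫ ω, (X ω - m) ∂μ = 0 := by
      simp [integral_sub hX (integrable_const m), ← hm]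
    rw [hgap_eq, integral_sub hcentered hcross, integral_const_mul, hcentered_integral,
      integral_sub hfXX (hfX.mul_const m), integral_mul_const]
    ring
  have hgap_nonneg : 0 ≤ gap := fun ω ↦ by
    rcases le_total m (X ω) with h | h
    · exact mul_nonneg (sub_nonneg.2 (hf h)) (sub_nonneg.2 h)
    · exact mul_nonneg_of_nonpos_of_nonpos (sub_nonpos.2 (hf h)) (sub_nonpos.2 h)
  have hgap_ne : ∫ ω, gap ω ∂μ ≠ 0 := fun h ↦ hconst (f m) <| by
    filter_upwards [(integral_eq_zero_iff_of_nonneg hgap_nonneg hgap_int).1 h] with ω hω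
    rcases mul_eq_zero.1 hω with h | h
    · exact (sub_eq_zero.1 h).symm
    · rw [sub_eq_zero.1 h]
  exact sub_pos.1 (hgap_integral ▸ (integral_nonneg hgap_nonneg).lt_of_ne' hgap_ne)

section Tilted

variable {X f : Ω → ℝ}

theorem integral_exp_mul_eq_mul_integral_tilted (hf : Integrable (fun ω ↦ exp (f ω)) μ)
    (g : Ω → ℝ) :
    ∫ ω, exp (f ω) * g ω ∂μ = (∫ ω, exp (f ω) ∂μ) * ∫ ω, g ω ∂(μ.tilted f) := by
  rcases eq_zero_or_neZero μ with rfl | _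
  · simp
  have hpos : 0 < ∫ ω, exp (f ω) ∂μ := integral_exp_pos hf
  rw [integral_tilted, ← integral_const_mul]
  congr with ω
  rw [smul_eq_mul, ← mul_assoc, mul_div_cancel₀ _ hpos.ne']

theorem integral_exp_mul_add_eq_mul_mgf_tilted (hf : Integrable (fun ω ↦ exp (f ω)) μ) (t : ℝ) :
    ∫ ω, exp (t * X ω + f ω) ∂μ = (∫ ω, exp (f ω) ∂μ) * mgf X (μ.tilted f) t := by
  rw [mgf, ← integral_exp_mul_eq_mul_integral_tilted hf]
  simp only [exp_add, mul_comm]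

theorem integrableExpSet_tilted (hf : Integrable (fun ω ↦ exp (f ω)) μ) :
    integrableExpSet X (μ.tilted f) = {t | Integrable (fun ω ↦ exp (t * X ω + f ω)) μ} := by
  ext t
  simp only [integrableExpSet, mem_ofPred_eq, integrable_tilted_iff hf, smul_eq_mul, exp_add,
    mul_comm]

theorem integrable_exp_of_eventually_integrable_exp_mul_add
    (h : ∀ᶠ t in 𝓝 (0 : ℝ), Integrable (fun ω ↦ exp (t * X ω + f ω)) μ) :
    Integrable (fun ω ↦ exp (f ω)) μ := by
  simpa using h.self_of_nhds

theorem zero_mem_interior_integrableExpSet_tilted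
    (h : ∀ᶠ t in 𝓝 (0 : ℝ), Integrable (fun ω ↦ exp (t * X ω + f ω)) μ) :
    0 ∈ interior (integrableExpSet X (μ.tilted f)) := by
  have hf := integrable_exp_of_eventually_integrable_exp_mul_add h
  rw [integrableExpSet_tilted hf]
  exact mem_interior_iff_mem_nhds.2 h

theorem analyticAt_zero_integral_exp_mul_add
    (h : ∀ᶠ t in 𝓝 (0 : ℝ), Integrable (fun ω ↦ exp (t * X ω + f ω)) μ) :
    AnalyticAt ℝ (fun t ↦ ∫ ω, exp (t * X ω + f ω) ∂μ) 0 := by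
  have hf := integrable_exp_of_eventually_integrable_exp_mul_add h
  simp only [integral_exp_mul_add_eq_mul_mgf_tilted hf]
  exact analyticAt_const.mul (analyticAt_mgf (zero_mem_interior_integrableExpSet_tilted h))

theorem deriv_zero_integral_exp_mul_add
    (h : ∀ᶠ t in 𝓝 (0 : ℝ), Integrable (fun ω ↦ exp (t * X ω + f ω)) μ) :
    deriv (fun t ↦ ∫ ω, exp (t * X ω + f ω) ∂μ) 0 = ∫ ω, exp (f ω) * X ω ∂μ := by
  have hf := integrable_exp_of_eventually_integrable_exp_mul_add h
  simp only [integral_exp_mul_add_eq_mul_mgf_tilted hf, deriv_const_mul_field,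
    deriv_mgf_zero (zero_mem_interior_integrableExpSet_tilted h),
    integral_exp_mul_eq_mul_integral_tilted hf]

theorem integrable_exp_mul_of_eventually_integrable_exp_mul_add
    (h : ∀ᶠ t in 𝓝 (0 : ℝ), Integrable (fun ω ↦ exp (t * X ω + f ω)) μ) :
    Integrable (fun ω ↦ exp (f ω) * X ω) μ := by
  have hf := integrable_exp_of_eventually_integrable_exp_mul_add h
  exact (integrable_tilted_iff hf X).1
    (integrable_of_mem_interior_integrableExpSet (zero_mem_interior_integrableExpSet_tilted h))

end Tilted

theorem integrable_exp_add_of_ae_le {g f : Ω → ℝ} {M : ℝ}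
    (hg : Integrable (fun ω ↦ exp (g ω)) μ) (hf : AEMeasurable f μ) (hfM : ∀ᵐ ω ∂μ, f ω ≤ M) :
    Integrable (fun ω ↦ exp (g ω + f ω)) μ := by
  simp only [exp_add]
  refine hg.mul_bdd (c := exp M) hf.exp.aestronglyMeasurable ?_
  filter_upwards [hfM] with ω hω
  rw [norm_of_nonneg (exp_pos _).le]
  exact exp_le_exp.2 hω

theorem integrableExpSet_eq_univ_of_hasLaw_gaussianReal {Z : Ω → ℝ} {m : ℝ} {s : NNReal}
    (hZ : HasLaw Z (gaussianReal m s) μ) : integrableExpSet Z μ = univ := by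
  refine eq_univ_of_forall fun t ↦ ?_
  have hint : Integrable (fun z ↦ exp (t * z)) (μ.map Z) :=
    hZ.map_eq ▸ integrable_exp_mul_gaussianReal t
  exact hint.comp_aemeasurable hZ.aemeasurable

end

theorem stmt_10_general
    {Ω : Type*} [MeasurableSpace Ω] (μ : Measure Ω) [IsProbabilityMeasure μ]
    (Z : Ω → ℝ) (hZint : Integrable Z μ) (hZmean : ∫ ω, Z ω ∂μ ≤ 0)
    (v : ℝ → ℝ) (hvmono : Antitone v)
    (hexp : ∀ᶠ s in 𝓝 (0 : ℝ), Integrable (fun ω ↦ exp (s * Z ω + v (Z ω))) μ)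
    (hvnonconst : ∀ c : ℝ, ¬ ∀ᵐ ω ∂μ, v (Z ω) = c) :
    (∫ ω, exp (v (Z ω)) * Z ω ∂μ) < (∫ ω, exp (v (Z ω)) ∂μ) * ∫ ω, Z ω ∂μ ∧
    deriv (fun s : ℝ ↦ ∫ ω, exp (s * Z ω + v (Z ω)) ∂μ) 0 = ∫ ω, exp (v (Z ω)) * Z ω ∂μ ∧
    deriv (fun s : ℝ ↦ ∫ ω, exp (s * Z ω + v (Z ω)) ∂μ) 0 < 0 ∧
    ∃ σ₀ > (0 : ℝ),
      StrictAntiOn (fun s : ℝ ↦ ∫ ω, exp (s * Z ω + v (Z ω)) ∂μ) (Icc 0 σ₀) := by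
  have hcomonotony : ∫ ω, exp (v (Z ω)) * Z ω ∂μ < (∫ ω, exp (v (Z ω)) ∂μ) * ∫ ω, Z ω ∂μ :=
    integral_antitone_comp_mul_lt (exp_monotone.comp_antitone hvmono) hZint
      (integrable_exp_of_eventually_integrable_exp_mul_add hexp)
      (integrable_exp_mul_of_eventually_integrable_exp_mul_add hexp)
      fun c hc ↦ hvnonconst (log c) (hc.mono fun ω hω ↦ by rw [← hω, Function.comp, log_exp])
  have hderiv := deriv_zero_integral_exp_mul_add hexp
  have hderiv_neg : deriv (fun s : ℝ ↦ ∫ ω, exp (s * Z ω + v (Z ω)) ∂μ) 0 < 0 :=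
    hderiv ▸ hcomonotony.trans_le
      (mul_nonpos_of_nonneg_of_nonpos (integral_nonneg fun _ ↦ (exp_pos _).le) hZmean)
  exact ⟨hcomonotony, hderiv, hderiv_neg, exists_strictAntiOn_Icc_of_deriv_neg
    (analyticAt_zero_integral_exp_mul_add hexp).contDiffAt hderiv_neg⟩

/-- Counter-example via co-monotony: if `Z` is standard Gaussian and `v` is bounded,
non-increasing and not a.e. constant for the Gaussian law, then
`E[e^{v(Z)} Z] < E[e^{v(Z)}]·E[Z] = 0`; consequently `ψ(σ) = E[e^{σZ+v(Z)}]` has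
`ψ'(0) = E[e^{v(Z)}Z] < 0` and `ψ` is strictly decreasing on some `[0,σ₀]`. -/
theorem stmt_10
    {Ω : Type*} [MeasurableSpace Ω] (μ : Measure Ω) [IsProbabilityMeasure μ]
    (Z : Ω → ℝ) (hZmeas : Measurable Z)
    (hZlaw : Measure.map Z μ = ProbabilityTheory.gaussianReal 0 1)
    (v : ℝ → ℝ) (hvmeas : Measurable v)
    (M : ℝ) (hvbdd : ∀ x, |v x| ≤ M)
    (hvmono : Antitone v)
    (hvnonconst : ∀ c : ℝ, ¬ (∀ᵐ z ∂(ProbabilityTheory.gaussianReal 0 1), v z = c)) :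
    (∫ ω, Z ω ∂μ) = 0 ∧
    (∫ ω, Real.exp (v (Z ω)) * Z ω ∂μ)
      < (∫ ω, Real.exp (v (Z ω)) ∂μ) * ∫ ω, Z ω ∂μ ∧
    deriv (fun s : ℝ => ∫ ω, Real.exp (s * Z ω + v (Z ω)) ∂μ) 0
      = ∫ ω, Real.exp (v (Z ω)) * Z ω ∂μ ∧
    deriv (fun s : ℝ => ∫ ω, Real.exp (s * Z ω + v (Z ω)) ∂μ) 0 < 0 ∧
    ∃ σ₀ > (0 : ℝ),
      StrictAntiOn (fun s : ℝ => ∫ ω, Real.exp (s * Z ω + v (Z ω)) ∂μ)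
        (Set.Icc 0 σ₀) := by
  have hZ : HasLaw Z (gaussianReal 0 1) μ := ⟨hZmeas.aemeasurable, hZlaw⟩
  have hZexp := integrableExpSet_eq_univ_of_hasLaw_gaussianReal hZ
  have hZint : Integrable Z μ := integrable_of_mem_interior_integrableExpSet (by simp [hZexp])
  have hZmean : ∫ ω, Z ω ∂μ = 0 := hZ.integral_eq.trans integral_id_gaussianReal
  have hexp (s : ℝ) : Integrable (fun ω ↦ exp (s * Z ω + v (Z ω))) μ :=
    integrable_exp_add_of_ae_le (hZexp.ge (mem_univ s)) (hvmeas.comp hZmeas).aemeasurable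
      (.of_forall fun ω ↦ (le_abs_self _).trans (hvbdd (Z ω)))
  have hnonconst (c : ℝ) : ¬ ∀ᵐ ω ∂μ, v (Z ω) = c := fun h ↦
    hvnonconst c ((hZ.ae_iff (measurableSet_setOfPred.1 (hvmeas (measurableSet_singleton c)))).1 h)
  exact ⟨hZmean, stmt_10_general μ Z hZint hZmean.le v hvmono (.of_forall hexp) hnonconst⟩
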